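/- Let −1 < α ≤ 1/2, and let j > 0 be the second positive zero of the Bessel function J_α, i.e. J_α(j) = 0 and there exists exactly one z with 0 < z < j and J_α(z) = 0. If β is a real number with −1/2 < β < α + 1 and ∫₀^j t^{−β} J_α(t) dt = 0, then max(−α−1, −1/2) < β ≤ −(α+1)/3. -/

import Mathlib

open Real

/-- The Bessel function of the first kind of real order `α`. -/
noncomputable def besselJ (α : ℝ) (t : ℝ) : ℝ :=
  ∑' k : ℕ, (-1 : ℝ) ^ k / ((k.factorial : ℝ) * Real.Gamma (α + k + 1)) *
    (t / 2) ^ (2 * (k : ℝ) + α)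

/-!
In the variable `z = (t / 2) ^ 2` the integrals `∫₀ʲ t ^ δ * J_α(t) dt` become weighted means `Φ`
of the entire function `C_α`. Since `J_α` changes sign once on `(0, j)`, from positive to
negative, the integral cannot vanish at an exponent `δ` above one where it is negative or below
one where it is nonnegative. It is negative at `δ = α + 1`, because there `Φ` is
`C_{α+1} = -C_α'`, which is positive at the first zero of `C_α` and negative at the second.

The integral is nonnegative at `δ = (α + 1) / 3`. For `α = 1 / 2`, `Φ` is a multiple of `sin² √z / z`
and the quadratic form `E` in `Φ`, `Φ'` and `C_{α+1}` called `besselEnergy` below vanishes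
identically. For `α < 1 / 2` the same form satisfies `z E' + p E = q Φ ρ` with `p, q > 0` and with
`ρ > 0` as long as `Φ > 0`. So `E` is positive at the first zero of `Φ`, whereas `E = -z Φ' ^ 2`
at any zero of `Φ`. All these positivity claims rest on one remark: if `z y' + p y > 0` with
`p > 0`, then `z ^ p * y` increases from `0`.
-/

open Set Filter MeasureTheory

section PowerSeries

variable {a : ℕ → ℝ}

theorem summable_natCast_mul_mul_pow (ha : ∀ z : ℝ, Summable fun k ↦ a k * z ^ k) (z : ℝ) :
    Summable fun k : ℕ ↦ k * a k * z ^ k := by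
  refine .of_norm_bounded (ha (2 * z)).norm fun k ↦ ?_
  have hk : (k : ℝ) ≤ 2 ^ k := mod_cast Nat.lt_two_pow_self.le
  simp only [norm_mul, norm_pow, mul_pow, Real.norm_ofNat, Real.norm_natCast]
  calc (k : ℝ) * ‖a k‖ * ‖z‖ ^ k ≤ 2 ^ k * ‖a k‖ * ‖z‖ ^ k := by gcongr
    _ = ‖a k‖ * (2 ^ k * ‖z‖ ^ k) := by ring

theorem mul_tsum_add_one_mul_pow (ha : ∀ z : ℝ, Summable fun k ↦ a k * z ^ k) (z : ℝ) :
    z * ∑' k : ℕ, (k + 1) * a (k + 1) * z ^ k = ∑' k : ℕ, k * a k * z ^ k := by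
  rw [(summable_natCast_mul_mul_pow ha z).tsum_eq_zero_add, ← tsum_mul_left]
  simp only [Nat.cast_zero, zero_mul, zero_add, Nat.cast_succ, pow_succ]
  exact tsum_congr fun k ↦ by ring

theorem hasDerivAt_tsum_mul_pow (ha : ∀ z : ℝ, Summable fun k ↦ a k * z ^ k) (z : ℝ) :
    HasDerivAt (fun x ↦ ∑' k, a k * x ^ k) (∑' k : ℕ, (k + 1) * a (k + 1) * z ^ k) z := by
  set R : ℝ := |z| + 1
  have hz : z ∈ Metric.ball (0 : ℝ) R := by simp [R]
  have hbound (k : ℕ) (y : ℝ) (hy : y ∈ Metric.ball (0 : ℝ) R) :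
      ‖a k * (k * y ^ (k - 1))‖ ≤ ‖k * a k * R ^ k‖ := by
    have hyR : ‖y‖ ≤ R := (mem_ball_zero_iff.1 hy).le
    have hR : 1 ≤ R := by simp [R]
    rw [← mul_assoc, mul_comm (a k), norm_mul, norm_mul _ (R ^ k), norm_pow, norm_pow,
      Real.norm_of_nonneg (zero_le_one.trans hR)]
    gcongr
    exact (pow_le_pow_left₀ (norm_nonneg y) hyR _).trans (pow_le_pow_right₀ hR (Nat.sub_le k 1))
  have hderiv := hasDerivAt_tsum_of_isPreconnected
    (summable_natCast_mul_mul_pow ha R).norm Metric.isOpen_ball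
    (convex_ball 0 R).isPreconnected (fun k y _ ↦ (hasDerivAt_pow k y).const_mul (a k)) hbound hz
    (ha z) hz
  have hsum : Summable fun k : ℕ ↦ a k * (k * z ^ (k - 1)) :=
    .of_norm_bounded (summable_natCast_mul_mul_pow ha R).norm fun k ↦ hbound k z hz
  refine hderiv.congr_deriv ?_
  rw [hsum.tsum_eq_zero_add]
  simp only [Nat.cast_zero, zero_mul, mul_zero, zero_add, Nat.cast_succ, Nat.add_sub_cancel]
  exact tsum_congr fun k ↦ by ring

end PowerSeries

section BesselClifford

/-- The coefficient of `(t / 2) ^ (2 * k + α)` in the Bessel function `J_α`. -/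
noncomputable def besselCoeff (α : ℝ) (k : ℕ) : ℝ :=
  (-1) ^ k / (k.factorial * Gamma (α + k + 1))

/-- The Bessel–Clifford function `C_α`: the entire function with
`J_α(t) = (t / 2) ^ α * C_α((t / 2) ^ 2)`. -/
noncomputable def besselClifford (α z : ℝ) : ℝ :=
  ∑' k, besselCoeff α k * z ^ k

/-- The weighted mean `∫₀¹ s ^ (μ - 1) * C_α(s z) ds`, which represents the integrals of
`t ^ δ * J_α(t)` with `2 * μ = δ + α + 1`. It is defined by integrating the series of `C_α`
termwise. -/
noncomputable def besselCliffordMean (α μ z : ℝ) : ℝ :=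
  ∑' k : ℕ, besselCoeff α k / (μ + k) * z ^ k

variable {α μ : ℝ}

theorem besselCoeff_zero_pos (hα : -1 < α) : 0 < besselCoeff α 0 := by
  have hΓ : 0 < Gamma (α + 1) := Gamma_pos_of_pos (by linarith)
  simpa [besselCoeff] using hΓ

theorem add_one_mul_besselCoeff_succ (k : ℕ) :
    (k + 1) * besselCoeff α (k + 1) = -besselCoeff (α + 1) k := by
  rw [besselCoeff, besselCoeff, Nat.factorial_succ, Nat.cast_mul, Nat.cast_succ, pow_succ,
    show α + (k + 1) + 1 = α + 1 + k + 1 by ring]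
  field_simp

theorem besselCoeff_eq_mul_besselCoeff_add_one (hα : -1 < α) (k : ℕ) :
    besselCoeff α k = (α + 1 + k) * besselCoeff (α + 1) k := by
  have hpos : 0 < α + 1 + k := by linarith [k.cast_nonneg (α := ℝ)]
  rw [besselCoeff, besselCoeff, Gamma_add_one hpos.ne', show α + k + 1 = α + 1 + k by ring]
  field_simp

theorem summable_besselCoeff_mul_pow (hα : -1 < α) (z : ℝ) :
    Summable fun k ↦ besselCoeff α k * z ^ k := by
  refine summable_of_ratio_norm_eventually_le (r := 1 / 2) (by norm_num) ?_
  filter_upwards [eventually_ge_atTop ⌈2 * |z|⌉₊] with k hk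
  have hkz : 2 * |z| ≤ k := Nat.ceil_le.1 hk
  have : (0 : ℝ) ≤ k := k.cast_nonneg
  have hratio : besselCoeff α k = -((α + 1 + k) * (k + 1)) * besselCoeff α (k + 1) := by
    rw [besselCoeff_eq_mul_besselCoeff_add_one hα,
      ← neg_eq_iff_eq_neg.2 (add_one_mul_besselCoeff_succ k)]
    ring
  rw [hratio, pow_succ]
  simp only [norm_mul, norm_neg, Real.norm_eq_abs]
  rw [abs_of_pos (by linarith : 0 < α + 1 + (k : ℝ)), abs_of_pos (by linarith : 0 < (k : ℝ) + 1)]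
  have hfactor : |z| ≤ 1 / 2 * ((α + 1 + k) * (k + 1)) := by nlinarith
  calc |besselCoeff α (k + 1)| * (|z ^ k| * |z|)
      ≤ |besselCoeff α (k + 1)| * (|z ^ k| * (1 / 2 * ((α + 1 + k) * (k + 1)))) := by gcongr
    _ = 1 / 2 * ((α + 1 + k) * (k + 1) * |besselCoeff α (k + 1)| * |z ^ k|) := by ring

theorem summable_besselCoeff_div_mul_pow (hα : -1 < α) (hμ : 0 < μ) (z : ℝ) :
    Summable fun k : ℕ ↦ besselCoeff α k / (μ + k) * z ^ k := by
  refine .of_norm_bounded ((summable_besselCoeff_mul_pow hα z).norm.div_const μ) fun k ↦ ?_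
  have : (0 : ℝ) ≤ k := k.cast_nonneg
  rw [div_mul_eq_mul_div, norm_div, Real.norm_of_nonneg (by linarith : 0 ≤ μ + k)]
  gcongr
  linarith

theorem hasDerivAt_besselClifford (hα : -1 < α) (z : ℝ) :
    HasDerivAt (besselClifford α) (-besselClifford (α + 1) z) z := by
  refine (hasDerivAt_tsum_mul_pow (summable_besselCoeff_mul_pow hα) z).congr_deriv ?_
  simp only [add_one_mul_besselCoeff_succ, neg_mul, tsum_neg, besselClifford]

theorem continuous_besselClifford (hα : -1 < α) : Continuous (besselClifford α) :=
  continuous_iff_continuousAt.2 fun z ↦ (hasDerivAt_besselClifford hα z).continuousAt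

theorem besselClifford_zero : besselClifford α 0 = besselCoeff α 0 := by
  rw [besselClifford, tsum_eq_single 0 fun k hk ↦ by simp [hk], pow_zero, mul_one]

theorem besselCliffordMean_zero : besselCliffordMean α μ 0 = besselCoeff α 0 / μ := by
  rw [besselCliffordMean, tsum_eq_single 0 fun k hk ↦ by simp [hk]]
  simp

theorem besselCliffordMean_add_one (hα : -1 < α) :
    besselCliffordMean α (α + 1) = besselClifford (α + 1) := by
  ext z
  refine tsum_congr fun k ↦ ?_
  have hpos : 0 < α + 1 + k := by linarith [k.cast_nonneg (α := ℝ)]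
  rw [besselCoeff_eq_mul_besselCoeff_add_one hα, mul_div_cancel_left₀ _ hpos.ne']

theorem add_one_mul_besselCoeff_succ_div (k : ℕ) :
    (k + 1) * (besselCoeff α (k + 1) / (μ + (k + 1 : ℕ))) =
      -(besselCoeff (α + 1) k / (μ + 1 + k)) := by
  rw [← mul_div_assoc, add_one_mul_besselCoeff_succ, neg_div, Nat.cast_succ, add_assoc μ,
    add_comm (1 : ℝ)]

theorem hasDerivAt_besselCliffordMean (hα : -1 < α) (hμ : 0 < μ) (z : ℝ) :
    HasDerivAt (besselCliffordMean α μ) (-besselCliffordMean (α + 1) (μ + 1) z) z := by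
  refine (hasDerivAt_tsum_mul_pow (summable_besselCoeff_div_mul_pow hα hμ) z).congr_deriv ?_
  simp only [add_one_mul_besselCoeff_succ_div, neg_mul, tsum_neg, besselCliffordMean]

theorem continuous_besselCliffordMean (hα : -1 < α) (hμ : 0 < μ) :
    Continuous (besselCliffordMean α μ) :=
  continuous_iff_continuousAt.2 fun z ↦ (hasDerivAt_besselCliffordMean hα hμ z).continuousAt

theorem mul_besselCliffordMean_add_one (hα : -1 < α) (hμ : 0 < μ) (z : ℝ) :
    z * besselCliffordMean (α + 1) (μ + 1) z =
      μ * besselCliffordMean α μ z - besselClifford α z := by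
  have hmean := summable_besselCoeff_div_mul_pow hα hμ
  have hshift := mul_tsum_add_one_mul_pow hmean z
  simp only [add_one_mul_besselCoeff_succ_div, neg_mul, tsum_neg, mul_neg] at hshift
  have hterm (k : ℕ) : besselCoeff α k * z ^ k =
      μ * (besselCoeff α k / (μ + k) * z ^ k) + k * (besselCoeff α k / (μ + k)) * z ^ k := by
    have : 0 < μ + k := by linarith [k.cast_nonneg (α := ℝ)]
    field_simp
  have hsplit : besselClifford α z =
      μ * besselCliffordMean α μ z + ∑' k : ℕ, k * (besselCoeff α k / (μ + k)) * z ^ k := by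
    rw [besselClifford, tsum_congr hterm, ((hmean z).mul_left μ).tsum_add
      (summable_natCast_mul_mul_pow hmean z), tsum_mul_left, besselCliffordMean]
  rw [besselCliffordMean]
  linarith

theorem mul_besselClifford_add_two (hα : -1 < α) (z : ℝ) :
    z * besselClifford (α + 1 + 1) z = (α + 1) * besselClifford (α + 1) z - besselClifford α z := by
  have h := mul_besselCliffordMean_add_one hα (by linarith : 0 < α + 1) z
  rwa [besselCliffordMean_add_one (by linarith : -1 < α + 1), besselCliffordMean_add_one hα] at h

end BesselClifford

section EulerOperator

variable {y y' : ℝ → ℝ} {p a c : ℝ}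

theorem strictMonoOn_rpow_mul (hp : 0 < p) (ha : 0 ≤ a) (hy : ∀ x ∈ Icc a c, HasDerivAt y (y' x) x)
    (hpos : ∀ x ∈ Ioo a c, 0 < x * y' x + p * y x) :
    StrictMonoOn (fun x ↦ x ^ p * y x) (Icc a c) := by
  refine strictMonoOn_of_deriv_pos (convex_Icc a c) ?_ fun x hx ↦ ?_
  · exact (continuous_id.rpow_const fun _ ↦ .inr hp.le).continuousOn.mul
      fun x hx ↦ (hy x hx).continuousAt.continuousWithinAt
  · rw [interior_Icc] at hx
    have hx0 : 0 < x := ha.trans_lt hx.1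
    have hderiv : HasDerivAt (fun x ↦ x ^ p * y x) (x ^ p / x * (x * y' x + p * y x)) x := by
      refine ((hasDerivAt_rpow_const (.inl hx0.ne')).mul
        (hy x (Ioo_subset_Icc_self hx))).congr_deriv ?_
      rw [rpow_sub_one hx0.ne']
      field_simp
      ring
    rw [hderiv.deriv]
    exact mul_pos (div_pos (rpow_pos_of_pos hx0 p) hx0) (hpos x hx)

theorem strictAntiOn_rpow_mul (hp : 0 < p) (ha : 0 ≤ a) (hy : ∀ x ∈ Icc a c, HasDerivAt y (y' x) x)
    (hneg : ∀ x ∈ Ioo a c, x * y' x + p * y x < 0) :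
    StrictAntiOn (fun x ↦ x ^ p * y x) (Icc a c) := by
  have hmono := strictMonoOn_rpow_mul hp ha (fun x hx ↦ (hy x hx).neg)
    fun x hx ↦ by simp only [Pi.neg_apply]; linarith [hneg x hx]
  simpa using hmono.neg

theorem pos_of_mul_deriv_add_mul_pos (hp : 0 < p) (hc : 0 < c)
    (hy : ∀ x ∈ Icc 0 c, HasDerivAt y (y' x) x) (hpos : ∀ x ∈ Ioo 0 c, 0 < x * y' x + p * y x) :
    0 < y c := by
  have hlt := strictMonoOn_rpow_mul hp le_rfl hy hpos (left_mem_Icc.2 hc.le)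
    (right_mem_Icc.2 hc.le) hc
  simp only [zero_rpow hp.ne', zero_mul] at hlt
  exact pos_of_mul_pos_right hlt (rpow_pos_of_pos hc p).le

end EulerOperator

theorem pos_of_pos_of_forall_ne_zero {f : ℝ → ℝ} {s : Set ℝ} {x y : ℝ} (hs : s.OrdConnected)
    (hf : ContinuousOn f s) (hne : ∀ z ∈ s, f z ≠ 0) (hx : x ∈ s) (hy : y ∈ s) (hfx : 0 < f x) :
    0 < f y := by
  by_contra! hfy
  obtain ⟨z, hz, hfz⟩ := hs.isPreconnected.intermediate_value hy hx hf ⟨hfy, hfx.le⟩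
  exact hne z hz hfz

theorem exists_first_zero {f : ℝ → ℝ} {a b : ℝ} (hab : a ≤ b) (hf : ContinuousOn f (Icc a b))
    (hfa : 0 < f a) (hfb : f b ≤ 0) :
    ∃ w ∈ Ioc a b, f w = 0 ∧ ∀ x ∈ Ico a w, 0 < f x := by
  have hcompact : IsCompact (Icc a b ∩ f ⁻¹' {0}) :=
    isCompact_Icc.of_isClosed_subset (hf.preimage_isClosed_of_isClosed isClosed_Icc
      isClosed_singleton) inter_subset_left
  have hne : (Icc a b ∩ f ⁻¹' {0}).Nonempty :=
    intermediate_value_Icc' hab hf ⟨hfb, hfa.le⟩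
  obtain ⟨w, ⟨hw, hfw⟩, hleast⟩ := hcompact.exists_isLeast hne
  have haw : a < w := hw.1.lt_of_ne fun h ↦ hfa.ne' (h ▸ hfw)
  have hsub : Ico a w ⊆ Icc a b := fun z hz ↦ ⟨hz.1, hz.2.le.trans hw.2⟩
  exact ⟨w, ⟨haw, hw.2⟩, hfw, fun x hx ↦
    pos_of_pos_of_forall_ne_zero ordConnected_Ico (hf.mono hsub)
      (fun z hz hfz ↦ hz.2.not_ge (hleast ⟨hsub hz, hfz⟩)) (left_mem_Ico.2 haw) hx hfa⟩

/-- `f` has exactly one sign change on `(0, c)`, at `a`, where it passes from positive to negative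
values. -/
structure CrossesDownAt (f : ℝ → ℝ) (a c : ℝ) : Prop where
  pos_point : 0 < a
  lt_right : a < c
  pos : ∀ x ∈ Ioo 0 a, 0 < f x
  neg : ∀ x ∈ Ioo a c, f x < 0

theorem crossesDownAt_of_deriv_neg {f : ℝ → ℝ} {a c : ℝ} (ha : 0 < a) (hac : a < c)
    (hf : ContinuousOn f (Ico 0 c)) (hf0 : 0 < f 0) (hfa : f a = 0)
    (hroot : ∀ x ∈ Ioo 0 c, f x = 0 → x = a)
    (hderiv : (∀ x ∈ Ioo 0 a, 0 < f x) → deriv f a < 0) : CrossesDownAt f a c := by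
  have hpos : ∀ x ∈ Ioo 0 a, 0 < f x := fun x hx ↦ by
    refine pos_of_pos_of_forall_ne_zero (s := Ico 0 a) ordConnected_Ico
      (hf.mono (Ico_subset_Ico_right hac.le)) (fun z hz hfz ↦ ?_) (left_mem_Ico.2 ha)
      (Ioo_subset_Ico_self hx) hf0
    rcases hz.1.eq_or_lt with rfl | hz0
    · exact hf0.ne' hfz
    · exact hz.2.ne (hroot z ⟨hz0, hz.2.trans hac⟩ hfz)
  obtain ⟨x, hfx, hx⟩ : ∃ x, f x < 0 ∧ x ∈ Ioo a c := by
    have hsign := (eventually_nhdsWithin_sign_eq_of_deriv_neg (hderiv hpos) hfa).filter_mono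
      (nhdsWithin_le_nhds (s := Ioi a))
    obtain ⟨x, hx, hxs⟩ := (hsign.and (Ioo_mem_nhdsGT hac)).exists
    exact ⟨x, by rwa [sign_neg (sub_neg.2 hxs.1), sign_eq_neg_one_iff] at hx, hxs⟩
  refine ⟨ha, hac, hpos, fun z hz ↦ neg_pos.1 ?_⟩
  refine pos_of_pos_of_forall_ne_zero (f := fun x ↦ -f x) ordConnected_Ioo
    (hf.mono (Ioo_subset_Ico_self.trans (Ico_subset_Ico_left ha.le))).neg (fun z hz hfz ↦ ?_) hx hz
    (neg_pos.2 hfx)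
  exact hz.1.ne' (hroot z ⟨ha.trans hz.1, hz.2⟩ (neg_eq_zero.1 hfz))

section SignPattern

variable {α a c : ℝ}

theorem crossesDownAt_besselClifford (hα : -1 < α) (ha : 0 < a) (hac : a < c)
    (hCa : besselClifford α a = 0) (hroot : ∀ x ∈ Ioo 0 c, besselClifford α x = 0 → x = a) :
    CrossesDownAt (besselClifford α) a c := by
  refine crossesDownAt_of_deriv_neg ha hac (continuous_besselClifford hα).continuousOn
    (besselClifford_zero (α := α) ▸ besselCoeff_zero_pos hα) hCa hroot fun hpos ↦ ?_
  rw [(hasDerivAt_besselClifford hα a).deriv, neg_lt_zero]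
  refine pos_of_mul_deriv_add_mul_pos (p := α + 1) (by linarith) ha
    (fun x _ ↦ hasDerivAt_besselClifford (by linarith) x) fun x hx ↦ ?_
  linarith [hpos x hx, mul_besselClifford_add_two hα x]

theorem CrossesDownAt.strictAntiOn_rpow_mul_besselClifford (hα : -1 < α)
    (hC : CrossesDownAt (besselClifford α) a c) :
    StrictAntiOn (fun x ↦ x ^ (α + 1) * besselClifford (α + 1) x) (Icc a c) := by
  refine strictAntiOn_rpow_mul (by linarith) hC.pos_point.le
    (fun x _ ↦ hasDerivAt_besselClifford (by linarith) x) fun x hx ↦ ?_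
  linarith [hC.neg x hx, mul_besselClifford_add_two hα x]

theorem CrossesDownAt.besselClifford_add_one_neg (hα : -1 < α)
    (hC : CrossesDownAt (besselClifford α) a c) (hCa : besselClifford α a = 0)
    (hCc : besselClifford α c = 0) : besselClifford (α + 1) c < 0 := by
  obtain ⟨ξ, hξ, hCξ⟩ := exists_hasDerivAt_eq_zero hC.lt_right
    (continuous_besselClifford hα).continuousOn (hCa.trans hCc.symm)
    fun x _ ↦ hasDerivAt_besselClifford hα x
  have hlt := hC.strictAntiOn_rpow_mul_besselClifford hα (Ioo_subset_Icc_self hξ)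
    (right_mem_Icc.2 hC.lt_right.le) hξ.2
  simp only [neg_eq_zero.1 hCξ, mul_zero] at hlt
  exact neg_of_mul_neg_right hlt (rpow_nonneg (hC.pos_point.trans hC.lt_right).le _)

theorem CrossesDownAt.besselClifford_add_one_pos_of_lt (hα : -1 < α)
    (hC : CrossesDownAt (besselClifford α) a c) {x w : ℝ} (hx : 0 < x) (hxw : x < w) (hwc : w ≤ c)
    (hw : 0 < besselClifford (α + 1) w) : 0 < besselClifford (α + 1) x := by
  rcases le_total x a with hxa | hax
  · refine pos_of_mul_deriv_add_mul_pos (p := α + 1) (by linarith) hx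
      (fun z _ ↦ hasDerivAt_besselClifford (by linarith) z) fun z hz ↦ ?_
    linarith [hC.pos z ⟨hz.1, hz.2.trans_le hxa⟩, mul_besselClifford_add_two hα z]
  · have hlt := hC.strictAntiOn_rpow_mul_besselClifford hα ⟨hax, hxw.le.trans hwc⟩
      ⟨hax.trans hxw.le, hwc⟩ hxw
    have hpos : 0 < w ^ (α + 1) * besselClifford (α + 1) w :=
      mul_pos (rpow_pos_of_pos (hx.trans hxw) _) hw
    exact pos_of_mul_pos_right (hpos.trans hlt) (rpow_nonneg hx.le _)

theorem CrossesDownAt.besselClifford_add_two_pos (hα : -1 < α)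
    (hC : CrossesDownAt (besselClifford α) a c) {x w : ℝ} (hx : 0 < x) (hxw : x < w) (hwc : w ≤ c)
    (hw : 0 < besselClifford (α + 1) w) : 0 < besselClifford (α + 1 + 1) x := by
  refine pos_of_mul_deriv_add_mul_pos (p := α + 1 + 1) (by linarith) hx
    (fun z _ ↦ hasDerivAt_besselClifford (by linarith) z) fun z hz ↦ ?_
  linarith [mul_besselClifford_add_two (by linarith : -1 < α + 1) z,
    hC.besselClifford_add_one_pos_of_lt hα hz.1 (hz.2.trans hxw) hwc hw]

end SignPattern

section Energy

variable {α μ a c w : ℝ}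

theorem CrossesDownAt.three_halves_mul_besselClifford_lt (hα : -1 < α) (hμ : 3 * μ = 2 * (α + 1))
    (hC : CrossesDownAt (besselClifford α) a c) (hw0 : 0 < w) (hwc : w ≤ c)
    (hw : 0 < besselCliffordMean α μ w) :
    3 / 2 * besselClifford (α + 1) w < besselCliffordMean α μ w := by
  rcases le_or_gt (besselClifford (α + 1) w) 0 with hneg | hpos
  · linarith
  have hμ0 : 0 < μ := by linarith
  have hα' : -1 < α + 1 := by linarith
  refine sub_pos.1 (pos_of_mul_deriv_add_mul_pos
    (y := fun x ↦ besselCliffordMean α μ x - 3 / 2 * besselClifford (α + 1) x) hμ0 hw0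
    (fun x _ ↦ (hasDerivAt_besselCliffordMean hα hμ0 x).sub
      ((hasDerivAt_besselClifford hα' x).const_mul (3 / 2))) fun x hx ↦ ?_)
  have hxC : 0 < x * besselClifford (α + 1 + 1) x :=
    mul_pos hx.1 (hC.besselClifford_add_two_pos hα hx.1 hx.2 hwc hpos)
  have hmean := mul_besselCliffordMean_add_one hα hμ0 x
  have hclifford := mul_besselClifford_add_two hα x
  linear_combination (1 / 2) * hxC + hmean - hclifford + (1 / 2) * besselClifford (α + 1) x * hμ

/-- The quadratic form in `Φ = besselCliffordMean α μ`, `Φ' = -besselCliffordMean (α + 1) (μ + 1)`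
and `C_{α+1}` that excludes zeros of `Φ` when `μ = 2 * (α + 1) / 3 < 1`. -/
noncomputable def besselEnergy (α μ z : ℝ) : ℝ :=
  besselCliffordMean α μ z ^ 2 - 2 * besselClifford (α + 1) z * besselCliffordMean α μ z
    - z * besselCliffordMean (α + 1) (μ + 1) z ^ 2
    + (μ + 1) / 2 * besselCliffordMean (α + 1) (μ + 1) z * besselCliffordMean α μ z

/-- The factor `ρ` in the source term `(1 - μ) / 2 * Φ * ρ` of the first-order equation satisfied by
`besselEnergy`, where `Φ = besselCliffordMean α μ`. -/
noncomputable def besselEnergySource (α μ z : ℝ) : ℝ :=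
  besselCliffordMean α μ z - besselClifford (α + 1) z
    - (μ + 1) / 2 * besselCliffordMean (α + 1) (μ + 1) z

theorem CrossesDownAt.besselEnergySource_pos (hα : -1 < α) (hμ : 3 * μ = 2 * (α + 1))
    (hC : CrossesDownAt (besselClifford α) a c) (hw0 : 0 < w) (hwc : w ≤ c)
    (hpos : ∀ x ∈ Ioo 0 w, 0 < besselCliffordMean α μ x) : 0 < besselEnergySource α μ w := by
  have hμ0 : 0 < μ := by linarith
  have hμ1 : 0 < μ + 1 := by linarith
  have hα' : -1 < α + 1 := by linarith
  refine pos_of_mul_deriv_add_mul_pos hμ1 hw0 (fun x _ ↦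
    ((hasDerivAt_besselCliffordMean hα hμ0 x).sub (hasDerivAt_besselClifford hα' x)).sub
      ((hasDerivAt_besselCliffordMean hα' hμ1 x).const_mul ((μ + 1) / 2))) fun x hx ↦ ?_
  have hlt := hC.three_halves_mul_besselClifford_lt hα hμ hx.1 (hx.2.le.trans hwc) (hpos x hx)
  have hmean := mul_besselCliffordMean_add_one hα hμ0 x
  have hmean' := mul_besselCliffordMean_add_one hα' hμ1 x
  have hclifford := mul_besselClifford_add_two hα x
  rw [besselEnergySource]
  linear_combination hlt + hmean - (μ + 1) / 2 * hmean' - hclifford +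
    (1 / 2) * besselClifford (α + 1) x * hμ

theorem differentiable_besselEnergy (hα : -1 < α) (hμ : 0 < μ) :
    Differentiable ℝ (besselEnergy α μ) := by
  have hΦ : Differentiable ℝ (besselCliffordMean α μ) := fun z ↦
    (hasDerivAt_besselCliffordMean hα hμ z).differentiableAt
  have hΦ' : Differentiable ℝ (besselCliffordMean (α + 1) (μ + 1)) := fun z ↦
    (hasDerivAt_besselCliffordMean (by linarith) (by linarith) z).differentiableAt
  have hC : Differentiable ℝ (besselClifford (α + 1)) := fun z ↦
    (hasDerivAt_besselClifford (by linarith) z).differentiableAt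
  unfold besselEnergy
  fun_prop

theorem mul_deriv_besselEnergy_add (hα : -1 < α) (hμ : 3 * μ = 2 * (α + 1)) (z : ℝ) :
    z * deriv (besselEnergy α μ) z + (3 * μ + 1) / 2 * besselEnergy α μ z =
      (1 - μ) / 2 * besselCliffordMean α μ z * besselEnergySource α μ z := by
  have hμ0 : 0 < μ := by linarith
  have hμ1 : 0 < μ + 1 := by linarith
  have hα' : -1 < α + 1 := by linarith
  have hΦ := hasDerivAt_besselCliffordMean hα hμ0 z
  have hΦ' := hasDerivAt_besselCliffordMean hα' hμ1 z
  have hC := hasDerivAt_besselClifford hα' z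
  have hderiv : HasDerivAt (besselEnergy α μ) _ z :=
    (((hΦ.pow 2).sub ((hC.const_mul 2).mul hΦ)).sub ((hasDerivAt_id z).mul (hΦ'.pow 2))).add
      ((hΦ'.const_mul ((μ + 1) / 2)).mul hΦ)
  have hmean := mul_besselCliffordMean_add_one hα hμ0 z
  have hmean' := mul_besselCliffordMean_add_one hα' hμ1 z
  have hclifford := mul_besselClifford_add_two hα z
  rw [hderiv.deriv, besselEnergy, besselEnergySource]
  simp only [id, Nat.cast_ofNat, Nat.add_one_sub_one, pow_one, Pi.pow_apply]
  linear_combination 2 * besselCliffordMean α μ z * (hclifford - hmean) +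
    (2 * z * besselCliffordMean (α + 1) (μ + 1) z - (μ + 1) / 2 * besselCliffordMean α μ z) * hmean'
    - besselCliffordMean α μ z * besselClifford (α + 1) z * hμ

theorem CrossesDownAt.besselCliffordMean_pos (hα : -1 < α) (hμ : 3 * μ = 2 * (α + 1)) (hμ1 : μ < 1)
    (hC : CrossesDownAt (besselClifford α) a c) : 0 < besselCliffordMean α μ c := by
  have hμ0 : 0 < μ := by linarith
  by_contra! hc
  obtain ⟨w, hw, hΦw, hpos⟩ := exists_first_zero (hC.pos_point.trans hC.lt_right).le
    (continuous_besselCliffordMean hα hμ0).continuousOn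
    (besselCliffordMean_zero (α := α) ▸ div_pos (besselCoeff_zero_pos hα) hμ0) hc
  have henergy : 0 < besselEnergy α μ w := by
    refine pos_of_mul_deriv_add_mul_pos (p := (3 * μ + 1) / 2) (by linarith) hw.1
      (fun x _ ↦ (differentiable_besselEnergy hα hμ0 x).hasDerivAt) fun x hx ↦ ?_
    rw [mul_deriv_besselEnergy_add hα hμ]
    exact mul_pos (mul_pos (by linarith) (hpos x (Ioo_subset_Ico_self hx)))
      (hC.besselEnergySource_pos hα hμ hx.1
        (hx.2.le.trans hw.2) fun y hy ↦ hpos y ⟨hy.1.le, hy.2.trans hx.2⟩)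
  rw [besselEnergy, hΦw] at henergy
  nlinarith [mul_nonneg hw.1.le (sq_nonneg (besselCliffordMean (α + 1) (μ + 1) w))]

theorem mul_besselCliffordMean_one (hα : 0 < α) (z : ℝ) :
    z * besselCliffordMean α 1 z = besselClifford (α - 1) 0 - besselClifford (α - 1) z := by
  have hderiv (x : ℝ) : HasDerivAt
      (fun x ↦ x * besselCliffordMean α 1 x + besselClifford (α - 1) x) 0 x := by
    refine (((hasDerivAt_id x).mul (hasDerivAt_besselCliffordMean (by linarith) one_pos x)).add
      (hasDerivAt_besselClifford (by linarith) x)).congr_deriv ?_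
    rw [sub_add_cancel, id, mul_neg,
      mul_besselCliffordMean_add_one (by linarith : -1 < α) one_pos]
    ring
  have hconst := is_const_of_deriv_eq_zero (fun x ↦ (hderiv x).differentiableAt)
    (fun x ↦ (hderiv x).deriv) z 0
  linarith

theorem besselClifford_neg_half_sq_add (z : ℝ) :
    besselClifford (-1 / 2) z ^ 2 + z * besselClifford (-1 / 2 + 1) z ^ 2 =
      besselClifford (-1 / 2) 0 ^ 2 := by
  have hderiv (x : ℝ) : HasDerivAt
      (fun x ↦ besselClifford (-1 / 2) x ^ 2 + x * besselClifford (-1 / 2 + 1) x ^ 2) 0 x := by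
    refine (((hasDerivAt_besselClifford (by norm_num) x).pow 2).add ((hasDerivAt_id x).mul
      ((hasDerivAt_besselClifford (by norm_num) x).pow 2))).congr_deriv ?_
    have hclifford := mul_besselClifford_add_two (by norm_num : (-1 : ℝ) < -1 / 2) x
    simp only [id, Nat.cast_ofNat, Nat.add_one_sub_one, pow_one, Pi.pow_apply]
    linear_combination -2 * besselClifford (-1 / 2 + 1) x * hclifford
  have hconst := is_const_of_deriv_eq_zero (fun x ↦ (hderiv x).differentiableAt)
    (fun x ↦ (hderiv x).deriv) z 0
  linarith

theorem besselCliffordMean_half_one_nonneg {z : ℝ} (hz : 0 < z) :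
    0 ≤ besselCliffordMean (1 / 2) 1 z := by
  have hmean := mul_besselCliffordMean_one one_half_pos z
  rw [show (1 / 2 : ℝ) - 1 = -1 / 2 by norm_num] at hmean
  have hzero : 0 ≤ besselClifford (-1 / 2) 0 :=
    besselClifford_zero (α := -1 / 2) ▸ (besselCoeff_zero_pos (by norm_num)).le
  have hle : besselClifford (-1 / 2) z ≤ besselClifford (-1 / 2) 0 := by
    refine le_of_sq_le_sq ?_ hzero
    nlinarith [besselClifford_neg_half_sq_add z,
      mul_nonneg hz.le (sq_nonneg (besselClifford (-1 / 2 + 1) z))]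
  refine nonneg_of_mul_nonneg_right ?_ hz
  linarith

theorem CrossesDownAt.besselCliffordMean_nonneg (hα : -1 < α) (hα' : α ≤ 1 / 2)
    (hC : CrossesDownAt (besselClifford α) a c) :
    0 ≤ besselCliffordMean α (2 * (α + 1) / 3) c := by
  rcases hα'.lt_or_eq with hlt | rfl
  · exact (hC.besselCliffordMean_pos hα (by ring) (by linarith)).le
  · convert besselCliffordMean_half_one_nonneg (hC.pos_point.trans hC.lt_right)
    norm_num

end Energy

section Integral

theorem CrossesDownAt.integral_rpow_mul_lt {f : ℝ → ℝ} {a c δ δ' : ℝ} (hf : CrossesDownAt f a c)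
    (hδ : δ < δ') (hint : IntervalIntegrable (fun t ↦ t ^ δ * f t) volume 0 c)
    (hint' : IntervalIntegrable (fun t ↦ t ^ δ' * f t) volume 0 c) :
    ∫ t in (0 : ℝ)..c, t ^ δ' * f t < a ^ (δ' - δ) * ∫ t in (0 : ℝ)..c, t ^ δ * f t := by
  have hdiff := (hint.const_mul (a ^ (δ' - δ))).sub hint'
  have hfactor {t : ℝ} (ht : 0 < t) : a ^ (δ' - δ) * (t ^ δ * f t) - t ^ δ' * f t =
      t ^ δ * ((a ^ (δ' - δ) - t ^ (δ' - δ)) * f t) := by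
    have hsplit : t ^ δ' = t ^ δ * t ^ (δ' - δ) := by rw [← rpow_add ht, add_sub_cancel]
    rw [hsplit]
    ring
  have ha : a ∈ uIcc 0 c := mem_uIcc_of_le hf.pos_point.le hf.lt_right.le
  have hleft := hdiff.mono_set (uIcc_subset_uIcc_left ha)
  have hright := hdiff.mono_set (uIcc_subset_uIcc_right ha)
  rw [← sub_pos, ← intervalIntegral.integral_const_mul,
    ← intervalIntegral.integral_sub (hint.const_mul _) hint',
    ← intervalIntegral.integral_add_adjacent_intervals hleft hright]
  refine add_pos
    (intervalIntegral.intervalIntegral_pos_of_pos_on hleft (fun t ht ↦ ?_) hf.pos_point)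
    (intervalIntegral.intervalIntegral_pos_of_pos_on hright (fun t ht ↦ ?_) hf.lt_right)
  · rw [hfactor ht.1]
    exact mul_pos (rpow_pos_of_pos ht.1 _)
      (mul_pos (sub_pos.2 (rpow_lt_rpow ht.1.le ht.2 (sub_pos.2 hδ))) (hf.pos t ht))
  · have ht0 := hf.pos_point.trans ht.1
    rw [hfactor ht0]
    exact mul_pos (rpow_pos_of_pos ht0 _) (mul_pos_of_neg_of_neg
      (sub_neg.2 (rpow_lt_rpow hf.pos_point.le ht.1 (sub_pos.2 hδ))) (hf.neg t ht))

variable {α δ β z j : ℝ}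

theorem besselJ_eq_rpow_mul_besselClifford {t : ℝ} (ht : 0 < t) :
    besselJ α t = (t / 2) ^ α * besselClifford α ((t / 2) ^ 2) := by
  rw [besselJ, besselClifford, ← tsum_mul_left]
  refine tsum_congr fun k ↦ ?_
  rw [besselCoeff, rpow_add (half_pos ht), ← pow_mul, ← rpow_natCast (t / 2), Nat.cast_mul,
    Nat.cast_two]
  ring

theorem rpow_mul_besselJ_eq {t : ℝ} (ht : 0 < t) :
    t ^ δ * besselJ α t = (2 ^ α)⁻¹ * (t ^ (δ + α) * besselClifford α ((t / 2) ^ 2)) := by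
  rw [besselJ_eq_rpow_mul_besselClifford ht, div_rpow ht.le zero_le_two, rpow_add ht]
  ring

theorem intervalIntegrable_rpow_mul_besselJ (hα : -1 < α) (hδ : -1 < δ + α) (hj : 0 ≤ j) :
    IntervalIntegrable (fun t ↦ t ^ δ * besselJ α t) volume 0 j := by
  have hcont : Continuous fun t : ℝ ↦ besselClifford α ((t / 2) ^ 2) :=
    (continuous_besselClifford hα).comp (by fun_prop)
  refine (((intervalIntegral.intervalIntegrable_rpow' hδ).mul_continuousOn
    hcont.continuousOn).const_mul (2 ^ α)⁻¹).congr fun t ht ↦ ?_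
  rw [uIoc_of_le hj] at ht
  exact (rpow_mul_besselJ_eq ht.1).symm

theorem hasDerivAt_rpow_mul_besselCliffordMean {p t : ℝ} (hα : -1 < α) (hp : 0 < p) (ht : 0 < t) :
    HasDerivAt (fun t ↦ t ^ p * besselCliffordMean α (p / 2) ((t / 2) ^ 2))
      (2 * (t ^ (p - 1) * besselClifford α ((t / 2) ^ 2))) t := by
  have hsq : HasDerivAt (fun t : ℝ ↦ (t / 2) ^ 2) (t / 2) t :=
    (((hasDerivAt_id t).div_const 2).pow 2).congr_deriv (by simp; ring)
  refine ((hasDerivAt_rpow_const (p := p) (.inl ht.ne')).mul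
    ((hasDerivAt_besselCliffordMean hα (half_pos hp) _).comp t hsq)).congr_deriv ?_
  have hmean := mul_besselCliffordMean_add_one hα (half_pos hp) ((t / 2) ^ 2)
  rw [show t ^ p = t ^ (p - 1) * t by rw [← rpow_add_one ht.ne', sub_add_cancel]]
  simp only [Function.comp_apply]
  linear_combination -2 * t ^ (p - 1) * hmean

theorem integral_rpow_mul_besselJ (hα : -1 < α) (hδ : -1 < δ + α) (hj : 0 ≤ j) :
    ∫ t in (0 : ℝ)..j, t ^ δ * besselJ α t =
      j ^ (δ + α + 1) / (2 * 2 ^ α) * besselCliffordMean α ((δ + α + 1) / 2) ((j / 2) ^ 2) := by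
  have hp : 0 < δ + α + 1 := by linarith
  have hcont : Continuous fun t : ℝ ↦ (2 * 2 ^ α)⁻¹ *
      (t ^ (δ + α + 1) * besselCliffordMean α ((δ + α + 1) / 2) ((t / 2) ^ 2)) := by
    exact continuous_const.mul ((continuous_id.rpow_const fun _ ↦ .inr hp.le).mul
      ((continuous_besselCliffordMean hα (half_pos hp)).comp (by fun_prop)))
  rw [intervalIntegral.integral_eq_sub_of_hasDerivAt_of_le hj hcont.continuousOn (fun t ht ↦ ?_)
    (intervalIntegrable_rpow_mul_besselJ hα hδ hj), zero_rpow hp.ne']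
  · ring
  · refine ((hasDerivAt_rpow_mul_besselCliffordMean hα hp ht.1).const_mul _).congr_deriv ?_
    rw [rpow_mul_besselJ_eq ht.1, add_sub_cancel_right]
    field_simp

theorem crossesDownAt_besselJ_of_besselClifford (hz : 0 < z) (hj : 0 < j)
    (hC : CrossesDownAt (besselClifford α) ((z / 2) ^ 2) ((j / 2) ^ 2)) :
    CrossesDownAt (besselJ α) z j := by
  have hsq {s t : ℝ} (hs : 0 < s) (hst : s < t) : (s / 2) ^ 2 < (t / 2) ^ 2 := by gcongr
  refine ⟨hz, ?_, fun t ht ↦ ?_, fun t ht ↦ ?_⟩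
  · have h := lt_of_pow_lt_pow_left₀ 2 (half_pos hj).le hC.lt_right
    linarith
  · rw [besselJ_eq_rpow_mul_besselClifford ht.1]
    exact mul_pos (rpow_pos_of_pos (half_pos ht.1) α)
      (hC.pos _ ⟨pow_pos (half_pos ht.1) 2, hsq ht.1 ht.2⟩)
  · have ht0 := hz.trans ht.1
    rw [besselJ_eq_rpow_mul_besselClifford ht0]
    exact mul_neg_of_pos_of_neg (rpow_pos_of_pos (half_pos ht0) α)
      (hC.neg _ ⟨hsq hz ht.1, hsq ht0 ht.2⟩)

theorem besselJ_eq_zero_iff {t : ℝ} (ht : 0 < t) :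
    besselJ α t = 0 ↔ besselClifford α ((t / 2) ^ 2) = 0 := by
  rw [besselJ_eq_rpow_mul_besselClifford ht, mul_eq_zero_iff_left
    (rpow_pos_of_pos (half_pos ht) α).ne']

theorem crossesDownAt_besselClifford_of_besselJ (hα : -1 < α) (hz : 0 < z) (hzj : z < j)
    (hJz : besselJ α z = 0) (hroot : ∀ t ∈ Ioo 0 j, besselJ α t = 0 → t = z) :
    CrossesDownAt (besselClifford α) ((z / 2) ^ 2) ((j / 2) ^ 2) := by
  have : 0 < z / 2 := half_pos hz
  refine crossesDownAt_besselClifford hα (by positivity) (by gcongr)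
    ((besselJ_eq_zero_iff hz).1 hJz) fun x hx hCx ↦ ?_
  have hsqrt : 0 < √x := sqrt_pos.2 hx.1
  have hx' : (2 * √x / 2) ^ 2 = x := by rw [mul_div_cancel_left₀ _ two_ne_zero, sq_sqrt hx.1.le]
  have hlt : √x < j / 2 := (sqrt_lt' (by linarith)).2 hx.2
  have ht := hroot (2 * √x) ⟨by positivity, by linarith⟩
    ((besselJ_eq_zero_iff (by positivity)).2 (hx'.symm ▸ hCx))
  rw [← ht, hx']

theorem neg_sub_one_lt_of_integral_eq_zero (hα : -1 < α) (hz : 0 < z) (hj : 0 < j)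
    (hC : CrossesDownAt (besselClifford α) ((z / 2) ^ 2) ((j / 2) ^ 2))
    (hJz : besselJ α z = 0) (hJj : besselJ α j = 0)
    (hroot : ∫ t in (0 : ℝ)..j, t ^ (-β) * besselJ α t = 0) : -α - 1 < β := by
  have hneg : ∫ t in (0 : ℝ)..j, t ^ (α + 1) * besselJ α t < 0 := by
    have hmean : (α + 1 + α + 1) / 2 = α + 1 := by ring
    rw [integral_rpow_mul_besselJ hα (by linarith) hj.le, hmean, besselCliffordMean_add_one hα]
    exact mul_neg_of_pos_of_neg (by positivity) (hC.besselClifford_add_one_neg hα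
      ((besselJ_eq_zero_iff hz).1 hJz) ((besselJ_eq_zero_iff hj).1 hJj))
  by_contra! hβ
  rcases (by linarith : α + 1 ≤ -β).eq_or_lt with heq | hlt
  · exact hneg.ne (heq ▸ hroot)
  · have hcross := (crossesDownAt_besselJ_of_besselClifford hz hj hC).integral_rpow_mul_lt hlt
      (intervalIntegrable_rpow_mul_besselJ hα (by linarith) hj.le)
      (intervalIntegrable_rpow_mul_besselJ hα (by linarith) hj.le)
    rw [hroot] at hcross
    exact hcross.not_gt (mul_neg_of_pos_of_neg (rpow_pos_of_pos hz _) hneg)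

theorem le_neg_div_three_of_integral_eq_zero (hα : -1 < α) (hα' : α ≤ 1 / 2) (hz : 0 < z)
    (hj : 0 < j) (hC : CrossesDownAt (besselClifford α) ((z / 2) ^ 2) ((j / 2) ^ 2))
    (hβ : β < α + 1) (hroot : ∫ t in (0 : ℝ)..j, t ^ (-β) * besselJ α t = 0) :
    β ≤ -(α + 1) / 3 := by
  have hnonneg : 0 ≤ ∫ t in (0 : ℝ)..j, t ^ ((α + 1) / 3) * besselJ α t := by
    have hmean : ((α + 1) / 3 + α + 1) / 2 = 2 * (α + 1) / 3 := by ring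
    rw [integral_rpow_mul_besselJ hα (by linarith) hj.le, hmean]
    exact mul_nonneg (by positivity) (hC.besselCliffordMean_nonneg hα hα')
  by_contra! hlt
  have hcross := (crossesDownAt_besselJ_of_besselClifford hz hj hC).integral_rpow_mul_lt
    (by linarith : -β < (α + 1) / 3)
    (intervalIntegrable_rpow_mul_besselJ hα (by linarith) hj.le)
    (intervalIntegrable_rpow_mul_besselJ hα (by linarith) hj.le)
  rw [hroot, mul_zero] at hcross
  exact hcross.not_ge hnonneg

end Integral

theorem stmt10 (α : ℝ) (hα₁ : -1 < α) (hα₂ : α ≤ 1 / 2)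
    (j : ℝ) (hj : 0 < j) (hjzero : besselJ α j = 0)
    (hsecond : ∃! z : ℝ, 0 < z ∧ z < j ∧ besselJ α z = 0)
    (β : ℝ) (hβ₁ : -1 / 2 < β) (hβ₂ : β < α + 1)
    (hroot : ∫ t in (0 : ℝ)..j, t ^ (-β) * besselJ α t = 0) :
    max (-α - 1) (-1 / 2) < β ∧ β ≤ -(α + 1) / 3 := by
  obtain ⟨z, ⟨hz, hzj, hzzero⟩, hunique⟩ := hsecond
  have hC := crossesDownAt_besselClifford_of_besselJ hα₁ hz hzj hzzero
    fun t ht hJt ↦ hunique t ⟨ht.1, ht.2, hJt⟩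
  exact ⟨max_lt (neg_sub_one_lt_of_integral_eq_zero hα₁ hz hj hC hzzero hjzero hroot) hβ₁,
    le_neg_div_three_of_integral_eq_zero hα₁ hα₂ hz hj hC hβ₂ hroot⟩
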